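/- Let G be a convex triangular grid such that the convex polygon R(G) is not a hexagon (i.e., has at most five sides), and let h₀ : B(G) → ℝ be a function on all boundary edges of G. Then the polyhedron C(G,h₀) is bounded, i.e., it is a (possibly empty) polytope. -/

import Mathlib

open scoped BigOperators

attribute [local instance] Classical.propDecidable

noncomputable section

/-- Points of the plane. -/
abbrev Pt : Type := ℝ × ℝ

/-- Directed edges: ordered pairs of points. -/
abbrev Ed : Type := Pt × Pt

/-- The three generating vectors ξ₁ = (1,0), ξ₂ = (−1/2, √3/2), ξ₃ = (−1/2, −√3/2). -/
noncomputable def xiv : Fin 3 → Pt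
  | 0 => ((1 : ℝ), (0 : ℝ))
  | 1 => (-(1 / 2 : ℝ), Real.sqrt 3 / 2)
  | 2 => (-(1 / 2 : ℝ), -(Real.sqrt 3 / 2))

/-- A little (lattice) triangle of the triangular grid, given by its base point and
its orientation (`up = true` for an upward triangle). -/
structure GridTriangle : Type where
  base : Pt
  up : Bool

noncomputable def GridTriangle.v0 (T : GridTriangle) : Pt := T.base
noncomputable def GridTriangle.v1 (T : GridTriangle) : Pt := T.base + xiv 0
noncomputable def GridTriangle.v2 (T : GridTriangle) : Pt :=
  if T.up then T.base + xiv 0 + xiv 1 else T.base + xiv 0 + xiv 2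

/-- The three directed edges of the 3-circuit surrounding a little triangle;
each has direction ξ₁, ξ₂ or ξ₃. -/
noncomputable def GridTriangle.e0 (T : GridTriangle) : Ed := (T.v0, T.v1)
noncomputable def GridTriangle.e1 (T : GridTriangle) : Ed := (T.v1, T.v2)
noncomputable def GridTriangle.e2 (T : GridTriangle) : Ed := (T.v2, T.v0)

noncomputable def GridTriangle.edgeFinset (T : GridTriangle) : Finset Ed := {T.e0, T.e1, T.e2}

/-- The closed region spanned by a little triangle. -/
noncomputable def GridTriangle.region (T : GridTriangle) : Set Pt :=
  convexHull ℝ {T.v0, T.v1, T.v2}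

/-- Vectors of the lattice generated by ξ₁ and ξ₂. -/
def IsLatticeVec (p : Pt) : Prop := ∃ m n : ℤ, p = (m : ℝ) • xiv 0 + (n : ℝ) • xiv 1

/-- A convex triangular grid: a finite nonempty set of little triangles of a common
translate of the triangular lattice whose union is a convex polygon.  (Its vertices,
edges, bounded faces and boundary are then those of the planar digraph formed by the
edges of the little triangles.) -/
structure ConvexGrid : Type where
  tris : Finset GridTriangle
  nonempty : tris.Nonempty
  aligned : ∀ T ∈ tris, ∀ T' ∈ tris, IsLatticeVec (T.base - T'.base)
  convex : Convex ℝ (⋃ T ∈ tris, GridTriangle.region T)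

/-- The region R(G) spanned by the grid. -/
noncomputable def ConvexGrid.region (G : ConvexGrid) : Set Pt :=
  ⋃ T ∈ G.tris, GridTriangle.region T

/-- The (directed) edge set E(G) of the grid. -/
noncomputable def ConvexGrid.edges (G : ConvexGrid) : Finset Ed :=
  G.tris.biUnion GridTriangle.edgeFinset

/-- The boundary edges B(G): edges lying in exactly one little triangle. -/
noncomputable def ConvexGrid.boundary (G : ConvexGrid) : Finset Ed :=
  G.edges.filter fun e => (G.tris.filter fun T => e ∈ T.edgeFinset).card = 1

/-- A cocirculation: `h(e)+h(e')+h(e'')=0` around each little triangle. -/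
def IsCocirculation (G : ConvexGrid) (h : Ed → ℝ) : Prop :=
  ∀ T ∈ G.tris, h T.e0 + h T.e1 + h T.e2 = 0

/-- `g` coincides with an affine function on `S`. -/
def AffineOn (g : Pt → ℝ) (S : Set Pt) : Prop :=
  ∃ φ : Pt →ᵃ[ℝ] ℝ, ∀ x ∈ S, g x = φ x

/-- A concave cocirculation: a cocirculation induced by a concave function on R(G)
which is affinely linear within each little triangle. -/
def IsConcaveCocirculation (G : ConvexGrid) (h : Ed → ℝ) : Prop :=
  IsCocirculation G h ∧
  ∃ g : Pt → ℝ, ConcaveOn ℝ G.region g ∧ (∀ T ∈ G.tris, AffineOn g T.region) ∧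
    ∀ e ∈ G.edges, h e = g e.2 - g e.1

/-- The polyhedron C(G,h₀) of concave cocirculations agreeing with h₀ on F. -/
def CC (G : ConvexGrid) (F : Set Ed) (h₀ : Ed → ℝ) : Set (Ed → ℝ) :=
  {h | IsConcaveCocirculation G h ∧ ∀ e ∈ F, h e = h₀ e}

/-- `h` is a vertex (extreme point) of the set `C` of cocirculations, regarded as a
subset of ℝ^{E(G)} (only the coordinates on the edges of `G` matter). -/
def IsVertexOf (G : ConvexGrid) (C : Set (Ed → ℝ)) (h : Ed → ℝ) : Prop :=
  h ∈ C ∧ ∀ h₁ ∈ C, ∀ h₂ ∈ C,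
    (∀ e ∈ G.edges, h e = (h₁ e + h₂ e) / 2) → ∀ e ∈ G.edges, h₁ e = h₂ e

/-!
The region is cut out by six half-planes, one for each direction of the grid, so it has six corners,
some of which may coincide. Corners are extreme points, hence belong to any set spanning the region;
if that set has at most five points, two corners coincide, and this is only possible at a point `c`
where the angle of the region is 60°.

The boundary data determine the differences of a potential `g` between all corners, so `g - g₀` is a
constant `κ` on the boundary, `g₀` being a fixed potential. Concavity bounds `g` below on the hull
of the corners by `κ + min g₀`. At `c` the region contains a single little triangle, two of whose
edges are boundary edges, so `g - g₀ = κ` on all of it; a chord from `c` through this triangle then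
bounds the concave function `g` above. Differences of `g` along edges no longer involve `κ`.
-/

/-! ### Directions and heights -/

lemma xiv_two : xiv 2 = -xiv 0 - xiv 1 := by
  ext <;> norm_num [xiv]

/-- The six directions of the edges and reversed edges of the grid, counterclockwise from `ξ₁`. -/
def hexDir : Fin 6 → Pt := ![xiv 0, -xiv 2, xiv 1, -xiv 0, xiv 2, -xiv 1]

/-- The sine of `k · 60°`, in units of `√3 / 2`. -/
def hexSin : Fin 6 → ℤ := ![0, 1, 1, 0, -1, -1]

/-- The signed distance to the line through the origin with direction `hexDir i`, positive to its
left and measured in units of the height `√3 / 2` of a little triangle. -/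
def height (i : Fin 6) : Pt →ₗ[ℝ] ℝ :=
  (2 / √3) • ((hexDir i).1 • LinearMap.snd ℝ ℝ ℝ - (hexDir i).2 • LinearMap.fst ℝ ℝ ℝ)

lemma hexDir_add_three (i : Fin 6) : hexDir (i + 3) = -hexDir i := by
  fin_cases i <;> simp [hexDir]

lemma hexDir_add_hexDir_add_two (i : Fin 6) : hexDir i + hexDir (i + 2) = hexDir (i + 1) := by
  fin_cases i <;> simp [hexDir, xiv_two, sub_eq_add_neg, add_comm, add_left_comm]

lemma height_hexDir (i j : Fin 6) : height i (hexDir j) = hexSin (j - i) := by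
  have h3 : √3 ≠ 0 := by positivity
  fin_cases i <;> fin_cases j <;> simp [height, hexDir, xiv, hexSin] <;> grind

lemma height_add_three (i : Fin 6) : height (i + 3) = -height i := by
  ext <;> simp [height, hexDir_add_three]

lemma height_add_height_add_two (i : Fin 6) : height i + height (i + 2) = height (i + 1) := by
  simp only [height, ← hexDir_add_hexDir_add_two, Prod.fst_add, Prod.snd_add]
  module

lemma height_add_four (i : Fin 6) : height (i + 4) = -height (i + 1) := by
  rw [show i + 4 = i + 1 + 3 by grind, height_add_three]

lemma height_add_height_add_height_eq_zero (i : Fin 6) (q : Pt) :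
    height i q + height (i + 2) q + height (i + 4) q = 0 := by
  rw [height_add_four, ← height_add_height_add_two]
  simp

lemma eq_smul_hexDir_add_smul_hexDir (i : Fin 6) (q : Pt) :
    q = height (i + 4) q • hexDir i + height i q • hexDir (i + 1) := by
  have h3 : √3 ≠ 0 := by positivity
  have h3' : √3 ^ 2 = 3 := Real.sq_sqrt (by norm_num)
  fin_cases i <;> ext <;> simp [height, hexDir, xiv] <;> grind

lemma eq_zero_of_height_eq_zero {i : Fin 6} {q : Pt} (h : height i q = 0)
    (h' : height (i + 1) q = 0) : q = 0 := by
  rw [eq_smul_hexDir_add_smul_hexDir i q, height_add_four]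
  simp [h, h']

lemma hexDir_injective : Function.Injective hexDir := by
  intro j k hjk
  have hsin (i : Fin 6) : hexSin (j - i) = hexSin (k - i) := by
    have := congrArg (height i) hjk
    simpa only [height_hexDir, Int.cast_inj] using this
  clear hjk
  decide +revert

lemma hexDir_ne_zero (i : Fin 6) : hexDir i ≠ 0 := by
  intro h
  have := height_hexDir (i - 1) i
  simp [h, hexSin] at this

lemma linearMap_apply_eq_height (f : Pt →ₗ[ℝ] ℝ) (i : Fin 6) (q : Pt) :
    f q = f (hexDir (i + 1)) * height i q - f (hexDir i) * height (i + 1) q := by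
  conv_lhs => rw [eq_smul_hexDir_add_smul_hexDir i q, height_add_four]
  simp only [map_add, map_smul, smul_eq_mul, LinearMap.neg_apply]
  ring

lemma exists_hexDir_nonpos_nonneg (f : Pt →ₗ[ℝ] ℝ) :
    ∃ i, f (hexDir i) ≤ 0 ∧ 0 ≤ f (hexDir (i + 1)) := by
  by_contra! hneg
  have hopp (i : Fin 6) : f (hexDir (i + 3)) = -f (hexDir i) := by rw [hexDir_add_three, map_neg]
  obtain ⟨i, hi⟩ : ∃ i, f (hexDir i) ≤ 0 := by
    rcases le_total (f (hexDir 0)) 0 with h | h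
    · exact ⟨0, h⟩
    · exact ⟨0 + 3, by rw [hopp]; linarith⟩
  have h₁ := hneg i hi
  have h₄ := hneg _ (hneg _ (hneg _ h₁.le).le).le
  rw [show i + 1 + 1 + 1 + 1 = i + 1 + 3 by grind, hopp] at h₄
  linarith

/-! ### Little triangles -/

namespace GridTriangle

/-- The three corners of a little triangle. -/
def vertices (T : GridTriangle) : Finset Pt := {T.v0, T.v1, T.v2}

/-- The little triangle with corners `p`, `p + hexDir j` and `p + hexDir (j + 1)`. -/
def wedge (p : Pt) (j : Fin 6) : GridTriangle :=
  ⟨p + ![0, xiv 1, -xiv 0, -xiv 0, xiv 2, 0] j, ![true, false, true, false, true, false] j⟩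

lemma region_eq_convexHull_vertices (T : GridTriangle) :
    T.region = convexHull ℝ (T.vertices : Set Pt) := by
  simp [region, vertices]

lemma isClosed_region (T : GridTriangle) : IsClosed T.region := by
  rw [region_eq_convexHull_vertices]
  exact T.vertices.finite_toSet.isClosed_convexHull ℝ

lemma mem_vertices_wedge {p q : Pt} {j : Fin 6} : q ∈ (wedge p j).vertices ↔
    q = p ∨ q = p + hexDir j ∨ q = p + hexDir (j + 1) := by
  fin_cases j <;> simp [vertices, v0, v1, v2, wedge, hexDir, xiv_two, sub_eq_add_neg, add_assoc,
    add_comm, add_left_comm, or_assoc, or_comm, or_left_comm]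

lemma wedge_add_hexDir (p : Pt) (j : Fin 6) : wedge (p + hexDir j) (j + 2) = wedge p j := by
  fin_cases j <;> simp [wedge, hexDir, xiv_two, add_assoc]

lemma wedge_add_hexDir_succ (p : Pt) (j : Fin 6) :
    wedge (p + hexDir (j + 1)) (j + 4) = wedge p j := by
  rw [← wedge_add_hexDir p j, ← wedge_add_hexDir (p + hexDir j), add_assoc p,
    show j + 2 + 2 = j + 4 by grind, hexDir_add_hexDir_add_two]

lemma exists_eq_wedge_base (T : GridTriangle) : ∃ j, T = wedge T.base j := by
  obtain ⟨p, _ | _⟩ := T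
  · exact ⟨5, by simp [wedge]⟩
  · exact ⟨0, by simp [wedge]⟩

lemma exists_eq_wedge {T : GridTriangle} {p : Pt} (hp : p ∈ T.vertices) : ∃ j, T = wedge p j := by
  obtain ⟨j, hj⟩ := T.exists_eq_wedge_base
  rw [hj, mem_vertices_wedge] at hp
  rcases hp with rfl | rfl | rfl
  · exact ⟨j, hj⟩
  · exact ⟨j + 2, by rwa [wedge_add_hexDir]⟩
  · exact ⟨j + 4, by rwa [wedge_add_hexDir_succ]⟩

lemma edge_mem_edgeFinset_wedge (p : Pt) (j : Fin 6) :
    (p, p + hexDir j) ∈ (wedge p j).edgeFinset ∨ (p + hexDir j, p) ∈ (wedge p j).edgeFinset := by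
  fin_cases j <;> simp [edgeFinset, e0, e1, e2, v0, v1, v2, wedge, hexDir, xiv_two, sub_eq_add_neg,
    add_assoc, add_comm, add_left_comm]

lemma mem_vertices_of_mem_edgeFinset {T : GridTriangle} {e : Ed} (he : e ∈ T.edgeFinset) :
    e.1 ∈ T.vertices ∧ e.2 ∈ T.vertices := by
  simp only [edgeFinset, Finset.mem_insert, Finset.mem_singleton] at he
  rcases he with rfl | rfl | rfl <;> simp [e0, e1, e2, vertices]

lemma exists_mem_vertices_apply_le (f : Pt →ₗ[ℝ] ℝ) {T : GridTriangle} {q : Pt}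
    (hq : q ∈ T.region) : ∃ v ∈ T.vertices, f v ≤ f q := by
  rw [region_eq_convexHull_vertices] at hq
  exact (f.concaveOn convex_univ).exists_le_of_mem_convexHull (Set.subset_univ _) hq

lemma height_of_mem_region_wedge {p q : Pt} {j : Fin 6} (hq : q ∈ (wedge p j).region) :
    0 ≤ height j (q - p) ∧ -1 ≤ height (j + 2) (q - p) ∧ 0 ≤ height (j + 4) (q - p) := by
  have bound (f : Pt →ₗ[ℝ] ℝ) (c : ℝ) (h₀ : c ≤ 0) (h₁ : c ≤ f (hexDir j))
      (h₂ : c ≤ f (hexDir (j + 1))) : c ≤ f (q - p) := by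
    obtain ⟨v, hv, hvq⟩ := exists_mem_vertices_apply_le f hq
    rw [mem_vertices_wedge] at hv
    rcases hv with rfl | rfl | rfl <;> simp only [map_add, map_sub] at * <;> linarith
  refine ⟨bound _ _ ?_ ?_ ?_, bound _ _ ?_ ?_ ?_, bound _ _ ?_ ?_ ?_⟩
  all_goals simp [height_hexDir, hexSin, add_sub_add_left_eq_sub]

end GridTriangle

/-! ### Vertices of the grid -/

open Filter Topology in
lemma eventually_forall_mem_imp_mem {X ι : Type*} [TopologicalSpace X] (I : Finset ι)
    {s : ι → Set X} (hs : ∀ i ∈ I, IsClosed (s i)) (p : X) :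
    ∀ᶠ x in 𝓝 p, ∀ i ∈ I, x ∈ s i → p ∈ s i := by
  refine (eventually_all_finset I).2 fun i hi ↦ ?_
  by_cases hp : p ∈ s i
  · exact .of_forall fun _ _ ↦ hp
  · filter_upwards [(hs i hi).isOpen_compl.mem_nhds hp] with x hx hxi using absurd hxi hx

namespace IsLatticeVec

lemma add {p q : Pt} (hp : IsLatticeVec p) (hq : IsLatticeVec q) : IsLatticeVec (p + q) := by
  obtain ⟨m, n, rfl⟩ := hp
  obtain ⟨m', n', rfl⟩ := hq
  exact ⟨m + m', n + n', by push_cast; module⟩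

lemma exists_height_eq_intCast {p : Pt} (hp : IsLatticeVec p) (i : Fin 6) :
    ∃ n : ℤ, height i p = n := by
  obtain ⟨m, n, rfl⟩ := hp
  refine ⟨m * hexSin (0 - i) + n * hexSin (2 - i), ?_⟩
  push_cast
  rw [← height_hexDir, ← height_hexDir]
  simp [hexDir]

end IsLatticeVec

lemma isLatticeVec_hexDir (j : Fin 6) : IsLatticeVec (hexDir j) := by
  refine ⟨![1, 1, 0, -1, -1, 0] j, ![0, 1, 1, 0, -1, -1] j, ?_⟩
  fin_cases j <;> simp [hexDir, xiv_two, add_comm, sub_eq_add_neg]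

namespace GridTriangle

lemma isLatticeVec_sub_base {T : GridTriangle} {p : Pt} (hp : p ∈ T.vertices) :
    IsLatticeVec (p - T.base) := by
  obtain ⟨j, hj⟩ := T.exists_eq_wedge_base
  rw [hj, mem_vertices_wedge] at hp
  rcases hp with rfl | rfl | rfl
  · exact ⟨0, 0, by simp⟩
  · simpa only [add_sub_cancel_left] using isLatticeVec_hexDir j
  · simpa only [add_sub_cancel_left] using isLatticeVec_hexDir (j + 1)

lemma mem_vertices_of_mem_region {T : GridTriangle} {p : Pt} (hp : p ∈ T.region)
    (hlat : IsLatticeVec (p - T.base)) : p ∈ T.vertices := by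
  obtain ⟨j, hj⟩ := T.exists_eq_wedge_base
  obtain ⟨a, ha⟩ := hlat.exists_height_eq_intCast j
  obtain ⟨b, hb⟩ := hlat.exists_height_eq_intCast (j + 4)
  have hsum := height_add_height_add_height_eq_zero j (p - T.base)
  have hdecomp := eq_smul_hexDir_add_smul_hexDir j (p - T.base)
  rw [ha, hb] at hdecomp
  rw [hj] at hp
  obtain ⟨h₀, h₂, h₄⟩ := height_of_mem_region_wedge hp
  rw [hj, mem_vertices_wedge, ← sub_eq_iff_eq_add', ← sub_eq_iff_eq_add', ← sub_eq_zero]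
  have ha₀ : 0 ≤ a := by exact_mod_cast ha ▸ h₀
  have hb₀ : 0 ≤ b := by exact_mod_cast hb ▸ h₄
  have hab : a + b ≤ 1 := by
    have : (a + b : ℝ) ≤ 1 := by linarith
    exact_mod_cast this
  obtain ⟨rfl, rfl⟩ | ⟨rfl, rfl⟩ | ⟨rfl, rfl⟩ :
      a = 0 ∧ b = 0 ∨ a = 0 ∧ b = 1 ∨ a = 1 ∧ b = 0 := by omega
  all_goals simp [hdecomp]

end GridTriangle

namespace ConvexGrid

/-- The vertices of the grid. -/
def vertices (G : ConvexGrid) : Finset Pt := G.tris.biUnion GridTriangle.vertices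

open GridTriangle

variable {G : ConvexGrid}

lemma mem_vertices {p : Pt} : p ∈ G.vertices ↔ ∃ T ∈ G.tris, p ∈ T.vertices := by
  simp [vertices]

lemma region_subset_of_mem {T : GridTriangle} (hT : T ∈ G.tris) : T.region ⊆ G.region :=
  Set.subset_biUnion_of_mem (u := GridTriangle.region) hT

lemma mem_region_of_mem_vertices {p : Pt} (hp : p ∈ G.vertices) : p ∈ G.region := by
  obtain ⟨T, hT, hpT⟩ := mem_vertices.1 hp
  apply region_subset_of_mem hT
  rw [region_eq_convexHull_vertices]
  exact subset_convexHull ℝ _ hpT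

lemma mem_region_of_mem_edges {e : Ed} (he : e ∈ G.edges) : e.1 ∈ G.region ∧ e.2 ∈ G.region := by
  obtain ⟨T, hT, heT⟩ := Finset.mem_biUnion.1 he
  exact (mem_vertices_of_mem_edgeFinset heT).imp
    (fun h ↦ mem_region_of_mem_vertices (mem_vertices.2 ⟨T, hT, h⟩))
    (fun h ↦ mem_region_of_mem_vertices (mem_vertices.2 ⟨T, hT, h⟩))

lemma exists_eq_wedge_of_mem_region {p : Pt} (hp : p ∈ G.vertices) {T : GridTriangle}
    (hT : T ∈ G.tris) (hpT : p ∈ T.region) : ∃ j, T = wedge p j := by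
  obtain ⟨U, hU, hpU⟩ := mem_vertices.1 hp
  have hlat := (isLatticeVec_sub_base hpU).add (G.aligned U hU T hT)
  rw [sub_add_sub_cancel] at hlat
  exact exists_eq_wedge (mem_vertices_of_mem_region hpT hlat)

lemma mem_region {q : Pt} : q ∈ G.region ↔ ∃ T ∈ G.tris, q ∈ T.region := by
  simp [region]

open Filter Topology in
lemma exists_lineMap_mem_wedge {p q : Pt} (hp : p ∈ G.vertices) (hq : q ∈ G.region) :
    ∃ j, wedge p j ∈ G.tris ∧
      ∃ t ∈ Set.Ioc (0 : ℝ) 1, AffineMap.lineMap p q t ∈ (wedge p j).region := by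
  have hlim : Tendsto (AffineMap.lineMap p q : ℝ → Pt) (𝓝[>] 0) (𝓝 p) :=
    (AffineMap.lineMap_continuous.tendsto' _ _ (AffineMap.lineMap_apply_zero p q)).mono_left
      nhdsWithin_le_nhds
  have hnear := hlim.eventually
    (eventually_forall_mem_imp_mem G.tris (fun T _ ↦ T.isClosed_region) p)
  obtain ⟨t, hnear, ht⟩ := (hnear.and (Ioc_mem_nhdsGT one_pos)).exists
  have hmem : AffineMap.lineMap p q t ∈ G.region :=
    G.convex.lineMap_mem (mem_region_of_mem_vertices hp) hq (Set.Ioc_subset_Icc_self ht)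
  obtain ⟨T, hT, hxT⟩ := mem_region.1 hmem
  obtain ⟨j, rfl⟩ := exists_eq_wedge_of_mem_region hp hT (hnear T hT hxT)
  exact ⟨j, hT, t, ht, hxT⟩

lemma exists_wedge_mem_tris_height_le {p q : Pt} (hp : p ∈ G.vertices) (hq : q ∈ G.region) :
    ∃ j, wedge p j ∈ G.tris ∧ height j p ≤ height j q ∧ height (j + 4) p ≤ height (j + 4) q := by
  obtain ⟨j, hT, t, ⟨ht₀, -⟩, hx⟩ := exists_lineMap_mem_wedge hp hq
  have hxp : AffineMap.lineMap p q t - p = t • (q - p) := by simp [AffineMap.lineMap_apply]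
  obtain ⟨h₀, -, h₄⟩ := height_of_mem_region_wedge hx
  simp only [hxp, map_smul, smul_eq_mul, mul_nonneg_iff_of_pos_left ht₀, map_sub,
    sub_nonneg] at h₀ h₄
  exact ⟨j, hT, h₀, h₄⟩

/-! ### Corners of the region -/

/-- The corner of `R(G)` between its sides of directions `hexDir i` and `hexDir (i + 1)`. A side
may shrink to a point, so that corners of different index may coincide. -/
structure IsCorner (G : ConvexGrid) (i : Fin 6) (a : Pt) : Prop where
  mem_vertices : a ∈ G.vertices
  isMinOn : IsMinOn (height i) G.region a
  isMinOn_succ : IsMinOn (height (i + 1)) G.region a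

lemma add_hexDir_mem_vertices {p : Pt} {j : Fin 6} (hT : wedge p j ∈ G.tris) :
    p + hexDir j ∈ G.vertices ∧ p + hexDir (j + 1) ∈ G.vertices :=
  ⟨mem_vertices.2 ⟨_, hT, by simp [mem_vertices_wedge]⟩,
    mem_vertices.2 ⟨_, hT, by simp [mem_vertices_wedge]⟩⟩

lemma exists_isCorner (G : ConvexGrid) (i : Fin 6) : ∃ a, G.IsCorner i a := by
  obtain ⟨T, hT⟩ := G.nonempty
  have hne : G.vertices.Nonempty := ⟨T.v0, mem_vertices.2 ⟨T, hT, by simp [GridTriangle.vertices]⟩⟩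
  obtain ⟨a, ha, hmin⟩ := G.vertices.exists_min_image (height i + height (i + 1)) hne
  -- By convexity `q` lies in the cone of some wedge at `a`, and minimality of `a` over the corners
  -- of that wedge leaves only the two wedges inside the 120° angle of the corner.
  have hle (q : Pt) (hq : q ∈ G.region) :
      height i a ≤ height i q ∧ height (i + 1) a ≤ height (i + 1) q := by
    obtain ⟨j, hT, hj, hj'⟩ := exists_wedge_mem_tris_height_le ha hq
    have hsum : 0 ≤ hexSin (j - i) + hexSin (j - (i + 1)) ∧
        0 ≤ hexSin (j + 1 - i) + hexSin (j + 1 - (i + 1)) := by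
      have h := hmin _ (add_hexDir_mem_vertices hT).1
      have h' := hmin _ (add_hexDir_mem_vertices hT).2
      simp only [LinearMap.add_apply, map_add, height_hexDir] at h h'
      constructor <;> rify <;> linarith
    have hcases : j = i + 1 ∨ j = i + 2 := by
      clear * - hsum
      decide +revert
    have hi (p : Pt) : height i p + height (i + 2) p = height (i + 1) p := by
      rw [← height_add_height_add_two, LinearMap.add_apply]
    have := hi a
    have := hi q
    rcases hcases with rfl | rfl
    · rw [show i + 1 + 4 = i + 2 + 3 by grind, height_add_three] at hj'
      simp only [LinearMap.neg_apply] at hj'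
      constructor <;> linarith
    · rw [show i + 2 + 4 = i by grind] at hj'
      constructor <;> linarith
  exact ⟨a, ha, fun q hq ↦ (hle q hq).1, fun q hq ↦ (hle q hq).2⟩

lemma hexSin_nonneg_of_isMinOn {p : Pt} {i j : Fin 6} (hT : wedge p j ∈ G.tris)
    (hmin : IsMinOn (height i) G.region p) :
    0 ≤ hexSin (j - i) ∧ 0 ≤ hexSin (j + 1 - i) := by
  have h := hmin (mem_region_of_mem_vertices (add_hexDir_mem_vertices hT).1)
  have h' := hmin (mem_region_of_mem_vertices (add_hexDir_mem_vertices hT).2)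
  simpa [height_hexDir] using And.intro h h'

lemma not_isMinOn_add_three {p : Pt} {i : Fin 6} (hmin : IsMinOn (height i) G.region p) :
    ¬ IsMinOn (height (i + 3)) G.region p := by
  intro hmin'
  have hconst {q : Pt} (hq : q ∈ G.vertices) : height i q = height i p := by
    have h := hmin (mem_region_of_mem_vertices hq)
    have h' := hmin' (mem_region_of_mem_vertices hq)
    simp only [height_add_three, LinearMap.neg_apply, Set.mem_ofPred_eq, neg_le_neg_iff] at h h'
    exact le_antisymm h' h
  obtain ⟨T, hT⟩ := G.nonempty
  obtain ⟨j, hj⟩ := T.exists_eq_wedge_base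
  rw [hj] at hT
  have h₀ := hconst (mem_vertices.2 ⟨_, hT, by simp [mem_vertices_wedge]⟩ : T.base ∈ G.vertices)
  have h₁ := hconst (add_hexDir_mem_vertices hT).1
  have h₂ := hconst (add_hexDir_mem_vertices hT).2
  simp only [map_add, h₀, height_hexDir, add_eq_left, Int.cast_eq_zero] at h₁ h₂
  clear * - h₁ h₂
  revert h₁ h₂
  decide +revert

lemma IsCorner.mem_extremePoints {i : Fin 6} {a : Pt} (ha : G.IsCorner i a) :
    a ∈ G.region.extremePoints ℝ := by
  refine mem_extremePoints_iff_left.2 ⟨mem_region_of_mem_vertices ha.mem_vertices, ?_⟩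
  rintro x hx y hy ⟨s, t, hs, ht, hst, rfl⟩
  have key {k : Fin 6} (hmin : IsMinOn (height k) G.region (s • x + t • y)) :
      height k (x - (s • x + t • y)) = 0 := by
    have hx' := hmin hx
    have hy' := hmin hy
    simp only [Set.mem_ofPred_eq, map_add, map_smul, smul_eq_mul] at hx' hy'
    simp only [map_sub, map_add, map_smul, smul_eq_mul]
    obtain rfl : s = 1 - t := by linarith
    nlinarith
  exact sub_eq_zero.1 (eq_zero_of_height_eq_zero (key ha.isMinOn) (key ha.isMinOn_succ))

lemma exists_isCorner_isCorner_succ {S : Finset Pt} (hS : S.card ≤ 5)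
    (hreg : G.region = convexHull ℝ (S : Set Pt)) :
    ∃ i c, G.IsCorner i c ∧ G.IsCorner (i + 1) c := by
  choose a ha using G.exists_isCorner
  have haS (i : Fin 6) : a i ∈ S :=
    extremePoints_convexHull_subset (hreg ▸ (ha i).mem_extremePoints)
  obtain ⟨k, -, l, -, hkl, hakl⟩ :=
    Finset.exists_ne_map_eq_of_card_lt_of_maps_to (s := .univ) (t := S) (f := a)
      (by simp; lia) (fun i _ ↦ haS i)
  obtain ⟨m, rfl⟩ : ∃ m, l = k + m := ⟨l - k, by simp⟩
  have hl := ha (k + m)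
  rw [← hakl] at hl
  fin_cases m
  · simp at hkl
  · exact ⟨k, a k, ha k, hl⟩
  · exact absurd hl.isMinOn_succ (by simpa [add_assoc] using not_isMinOn_add_three (ha k).isMinOn)
  · exact absurd hl.isMinOn (not_isMinOn_add_three (ha k).isMinOn)
  · exact absurd (ha k).isMinOn_succ
      (by simpa [add_assoc] using not_isMinOn_add_three hl.isMinOn)
  · refine ⟨k + 5, a k, hl, ?_⟩
    simpa [add_assoc] using ha k

lemma region_subset_convexHull_corners (G : ConvexGrid) :
    G.region ⊆ convexHull ℝ {a | ∃ i, G.IsCorner i a} := by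
  intro q hq
  by_contra hqc
  have hfin : {a | ∃ i, G.IsCorner i a}.Finite :=
    G.vertices.finite_toSet.subset fun a ⟨_, ha⟩ ↦ ha.mem_vertices
  obtain ⟨f, u, hfq, hfu⟩ :=
    geometric_hahn_banach_point_closed (convex_convexHull ℝ _) (hfin.isClosed_convexHull ℝ) hqc
  obtain ⟨i, hi, hi'⟩ := exists_hexDir_nonpos_nonneg (f : Pt →ₗ[ℝ] ℝ)
  obtain ⟨a, ha⟩ := G.exists_isCorner i
  have hfa : f a ≤ f q := by
    have hdecomp := linearMap_apply_eq_height (f : Pt →ₗ[ℝ] ℝ) i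
    have h₁ := mul_le_mul_of_nonneg_left (ha.isMinOn hq) hi'
    have h₂ := mul_le_mul_of_nonpos_left (ha.isMinOn_succ hq) hi
    calc f a = _ := hdecomp a
      _ ≤ _ := sub_le_sub h₁ h₂
      _ = f q := (hdecomp q).symm
  exact (hfq.trans (hfu a (subset_convexHull ℝ _ ⟨i, ha⟩))).not_ge hfa

/-! ### Boundary edges along the sides -/

lemma edge_mem_boundary {p : Pt} {i : Fin 6} (hT : wedge p i ∈ G.tris)
    (hmin : IsMinOn (height i) G.region p) :
    (p, p + hexDir i) ∈ G.boundary ∨ (p + hexDir i, p) ∈ G.boundary := by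
  have huniq {U : GridTriangle} (hU : U ∈ G.tris) (hp : p ∈ U.vertices)
      (hpi : p + hexDir i ∈ U.vertices) : U = wedge p i := by
    obtain ⟨j, rfl⟩ := exists_eq_wedge hp
    obtain ⟨hj, -⟩ := hexSin_nonneg_of_isMinOn hU hmin
    simp only [mem_vertices_wedge, add_eq_left, hexDir_ne_zero, false_or, add_right_inj,
      hexDir_injective.eq_iff] at hpi
    rcases hpi with rfl | rfl
    · rfl
    · simp [hexSin] at hj
  have hbdry {e : Ed} (he : e ∈ (wedge p i).edgeFinset)
      (hunique : ∀ U ∈ G.tris, e ∈ U.edgeFinset → U = wedge p i) : e ∈ G.boundary := by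
    refine Finset.mem_filter.2 ⟨Finset.mem_biUnion.2 ⟨_, hT, he⟩,
      Finset.card_eq_one.2 ⟨wedge p i, ?_⟩⟩
    exact Finset.eq_singleton_iff_unique_mem.2 ⟨by simp [hT, he], by simpa using hunique⟩
  refine (edge_mem_edgeFinset_wedge p i).imp (fun he ↦ hbdry he fun U hU heU ↦ ?_)
    (fun he ↦ hbdry he fun U hU heU ↦ ?_)
  · exact huniq hU (mem_vertices_of_mem_edgeFinset heU).1 (mem_vertices_of_mem_edgeFinset heU).2
  · exact huniq hU (mem_vertices_of_mem_edgeFinset heU).2 (mem_vertices_of_mem_edgeFinset heU).1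

lemma exists_wedge_along_side {p a : Pt} {i : Fin 6} (hp : p ∈ G.vertices)
    (hmin : IsMinOn (height i) G.region p) (ha : G.IsCorner i a) (hne : p ≠ a) :
    wedge p i ∈ G.tris := by
  have haR := mem_region_of_mem_vertices ha.mem_vertices
  obtain ⟨j, hT, hj, hj'⟩ := exists_wedge_mem_tris_height_le hp haR
  have hi : height i (a - p) = 0 := by
    rw [map_sub, sub_eq_zero]
    exact le_antisymm (ha.isMinOn (mem_region_of_mem_vertices hp)) (hmin haR)
  have hsin := hexSin_nonneg_of_isMinOn hT hmin
  have hdecomp := eq_smul_hexDir_add_smul_hexDir i (a - p)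
  rw [hi, zero_smul, add_zero] at hdecomp
  have hpos : 0 < height (i + 4) (a - p) := by
    refine lt_of_le_of_ne ?_ fun h ↦ hne ?_
    · have := ha.isMinOn_succ (mem_region_of_mem_vertices hp)
      rw [height_add_four]
      simpa using this
    · rw [← h, zero_smul, sub_eq_zero] at hdecomp
      exact hdecomp.symm
  have hnonneg {k : Fin 6} (hk : height k p ≤ height k a) : 0 ≤ hexSin (i - k) := by
    rw [← sub_nonneg, ← map_sub, hdecomp, map_smul, height_hexDir, smul_eq_mul,
      mul_nonneg_iff_of_pos_left hpos] at hk
    exact_mod_cast hk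
  have hij := hnonneg hj
  have hij' := hnonneg hj'
  have : j = i := by
    clear * - hsin hij hij'
    decide +revert
  rwa [← this]

section BoundaryConstant

variable {X : Type*} {f : Pt → X}

lemma apply_add_hexDir_eq (hf : ∀ e ∈ G.boundary, f e.1 = f e.2) {p : Pt} {i : Fin 6}
    (hT : wedge p i ∈ G.tris) (hmin : IsMinOn (height i) G.region p) :
    f (p + hexDir i) = f p := by
  rcases edge_mem_boundary hT hmin with he | he
  · exact (hf _ he).symm
  · exact hf _ he

lemma IsCorner.apply_eq_of_isMinOn (hf : ∀ e ∈ G.boundary, f e.1 = f e.2) {p a : Pt} {i : Fin 6}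
    (ha : G.IsCorner i a) (hp : p ∈ G.vertices) (hmin : IsMinOn (height i) G.region p) :
    f p = f a := by
  by_contra hne
  obtain ⟨q, hq, hleast⟩ := Finset.exists_min_image
    {q ∈ G.vertices | IsMinOn (height i) G.region q ∧ f q ≠ f a} (height (i + 1))
    ⟨p, by simp [hp, hmin, hne]⟩
  obtain ⟨hqG, hqmin, hqne⟩ := Finset.mem_filter.1 hq
  have hT := exists_wedge_along_side hqG hqmin ha (ne_of_apply_ne f hqne)
  have hstep := hleast (q + hexDir i) (Finset.mem_filter.2 ⟨(add_hexDir_mem_vertices hT).1, ?_, ?_⟩)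
  · simp only [map_add, height_hexDir, sub_add_cancel_left, le_add_iff_nonneg_right,
      Int.cast_nonneg_iff] at hstep
    exact absurd hstep (by decide)
  · intro y hy
    simpa [height_hexDir, hexSin] using hqmin hy
  · rwa [apply_add_hexDir_eq hf hT hqmin]

lemma IsCorner.apply_eq (hf : ∀ e ∈ G.boundary, f e.1 = f e.2) {a b : Pt} {i j : Fin 6}
    (ha : G.IsCorner i a) (hb : G.IsCorner j b) : f a = f b := by
  choose c hc using G.exists_isCorner
  have hperiodic : Function.Periodic (f ∘ c) 1 := fun k ↦
    ((hc (k + 1)).apply_eq_of_isMinOn hf (hc k).mem_vertices (hc k).isMinOn_succ).symm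
  have hstep : ∀ i j : Fin 6, i + (j - i).val • 1 = j := by decide
  calc
    f a = f (c i) := (hc i).apply_eq_of_isMinOn hf ha.mem_vertices ha.isMinOn
    _ = f (c j) := by
      simpa only [hstep, Function.comp_apply] using (hperiodic.nsmul (j - i).val i).symm
    _ = f b := ((hc j).apply_eq_of_isMinOn hf hb.mem_vertices hb.isMinOn).symm

lemma IsCorner.eq_add_two_of_wedge_mem_tris {c : Pt} {i j : Fin 6} (hc : G.IsCorner i c)
    (hc' : G.IsCorner (i + 1) c) (hT : wedge c j ∈ G.tris) : j = i + 2 := by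
  have hi := hexSin_nonneg_of_isMinOn hT hc.isMinOn
  have hi' := hexSin_nonneg_of_isMinOn hT hc'.isMinOn_succ
  clear * - hi hi'
  decide +revert

lemma IsCorner.apply_eq_of_mem_vertices_wedge (hf : ∀ e ∈ G.boundary, f e.1 = f e.2) {c v : Pt}
    {i j : Fin 6} (hc : G.IsCorner i c) (hc' : G.IsCorner (i + 1) c) (hT : wedge c j ∈ G.tris)
    (hv : v ∈ (wedge c j).vertices) : f v = f c := by
  obtain rfl := hc.eq_add_two_of_wedge_mem_tris hc' hT
  rw [mem_vertices_wedge] at hv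
  rcases hv with rfl | rfl | rfl
  · rfl
  · refine apply_add_hexDir_eq hf hT ?_
    exact (show i + 1 + 1 = i + 2 by grind) ▸ hc'.isMinOn_succ
  · have hback : c + hexDir (i + 2 + 1) + hexDir i = c := by
      rw [add_assoc i, show (2 + 1 : Fin 6) = 3 by decide, hexDir_add_three]
      abel
    have hmin : IsMinOn (height i) G.region (c + hexDir (i + 2 + 1)) := by
      intro y hy
      simpa [height_hexDir, hexSin, add_assoc] using hc.isMinOn hy
    rw [← wedge_add_hexDir_succ, show i + 2 + 4 = i by grind] at hT
    conv_rhs => rw [← hback]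
    exact (apply_add_hexDir_eq hf hT hmin).symm

end BoundaryConstant

end ConvexGrid

/-! ### Bounds on potentials -/

lemma AffineOn.eq_of_forall_mem_vertices {f : Pt → ℝ} {T : GridTriangle} {κ : ℝ}
    (hf : AffineOn f T.region) (hκ : ∀ v ∈ T.vertices, f v = κ) {x : Pt} (hx : x ∈ T.region) :
    f x = κ := by
  obtain ⟨φ, hφ⟩ := hf
  rw [hφ x hx]
  rw [T.region_eq_convexHull_vertices] at hx hφ
  have hsub : (T.vertices : Set Pt) ⊆ φ ⁻¹' {κ} := fun v hv ↦ by
    rw [Set.mem_preimage, ← hφ v (subset_convexHull ℝ _ hv)]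
    exact hκ v hv
  exact convexHull_min hsub ((convex_singleton κ).affine_preimage φ) hx

lemma AffineOn.sub {f g : Pt → ℝ} {s : Set Pt} (hf : AffineOn f s) (hg : AffineOn g s) :
    AffineOn (f - g) s := by
  obtain ⟨φ, hφ⟩ := hf
  obtain ⟨ψ, hψ⟩ := hg
  exact ⟨φ - ψ, fun x hx ↦ by simp [hφ x hx, hψ x hx]⟩

namespace ConvexGrid

open GridTriangle

variable {G : ConvexGrid}

/-- A function on the plane whose restriction to `R(G)` induces a concave cocirculation with the
values `h₀` on the boundary edges. -/
structure IsPotential (G : ConvexGrid) (h₀ : Ed → ℝ) (g : Pt → ℝ) : Prop where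
  concaveOn : ConcaveOn ℝ G.region g
  affineOn : ∀ T ∈ G.tris, AffineOn g T.region
  sub_eq : ∀ e ∈ G.boundary, g e.2 - g e.1 = h₀ e

lemma exists_isPotential {h₀ h : Ed → ℝ} (hh : h ∈ CC G G.boundary h₀) :
    ∃ g, G.IsPotential h₀ g ∧ ∀ e ∈ G.edges, h e = g e.2 - g e.1 := by
  obtain ⟨⟨-, g, hconc, haff, hg⟩, hh₀⟩ := hh
  exact ⟨g, ⟨hconc, haff, fun e he ↦ by
    rw [← hg e (Finset.filter_subset _ _ he), hh₀ e he]⟩, hg⟩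

namespace IsPotential

variable {h₀ : Ed → ℝ} {g₀ g : Pt → ℝ}

lemma sub_apply_eq_of_mem_boundary (hg₀ : G.IsPotential h₀ g₀) (hg : G.IsPotential h₀ g) {e : Ed}
    (he : e ∈ G.boundary) : (g - g₀) e.1 = (g - g₀) e.2 := by
  have := hg₀.sub_eq e he
  have := hg.sub_eq e he
  simp only [Pi.sub_apply]
  linarith

lemma exists_forall_le_add (hg₀ : G.IsPotential h₀ g₀) {i : Fin 6} {c : Pt}
    (hc : G.IsCorner i c) :
    ∃ m, ∀ g, G.IsPotential h₀ g → ∀ q ∈ G.region, (g - g₀) c + m ≤ g q := by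
  obtain ⟨v, -, hv⟩ := G.vertices.exists_min_image g₀ ⟨c, hc.mem_vertices⟩
  refine ⟨g₀ v, fun g hg q hq ↦ ?_⟩
  obtain ⟨a, ⟨j, ha⟩, haq⟩ := hg.concaveOn.exists_le_of_mem_convexHull
    (t := {a | ∃ i, G.IsCorner i a}) (fun a ⟨_, ha⟩ ↦ mem_region_of_mem_vertices ha.mem_vertices)
    (G.region_subset_convexHull_corners hq)
  have hκ := ha.apply_eq (fun _ ↦ hg₀.sub_apply_eq_of_mem_boundary hg) hc
  have := hv a ha.mem_vertices
  rw [Pi.sub_apply] at hκ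
  linarith

lemma exists_forall_apply_le (hg₀ : G.IsPotential h₀ g₀) {i : Fin 6} {c : Pt}
    (hc : G.IsCorner i c) (hc' : G.IsCorner (i + 1) c) {q : Pt} (hq : q ∈ G.region) :
    ∃ N, ∀ g, G.IsPotential h₀ g → g q ≤ (g - g₀) c + N := by
  obtain ⟨j, hT, t, ⟨ht₀, ht₁⟩, hx⟩ := exists_lineMap_mem_wedge hc.mem_vertices hq
  set x : Pt := AffineMap.lineMap c q t with hxt
  refine ⟨(g₀ x - (1 - t) * g₀ c) / t, fun g hg ↦ ?_⟩
  have hgx : (g - g₀) x = (g - g₀) c :=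
    ((hg.affineOn _ hT).sub (hg₀.affineOn _ hT)).eq_of_forall_mem_vertices
      (fun v ↦ hc.apply_eq_of_mem_vertices_wedge (fun _ ↦ hg₀.sub_apply_eq_of_mem_boundary hg)
        hc' hT) hx
  have hchord : (1 - t) * g c + t * g q ≤ g x := by
    rw [hxt, AffineMap.lineMap_apply_module]
    exact hg.concaveOn.2 (mem_region_of_mem_vertices hc.mem_vertices) hq (by linarith) ht₀.le
      (by ring)
  rw [← sub_le_iff_le_add', le_div_iff₀ ht₀]
  simp only [Pi.sub_apply] at hgx ⊢
  linarith

lemma exists_forall_abs_sub_le (hg₀ : G.IsPotential h₀ g₀) {i : Fin 6} {c : Pt}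
    (hc : G.IsCorner i c) (hc' : G.IsCorner (i + 1) c) {q : Pt} (hq : q ∈ G.region) :
    ∃ N, ∀ g, G.IsPotential h₀ g → |g q - (g - g₀) c| ≤ N := by
  obtain ⟨m, hm⟩ := hg₀.exists_forall_le_add hc
  obtain ⟨N, hN⟩ := hg₀.exists_forall_apply_le hc hc' hq
  refine ⟨max (-m) N, fun g hg ↦ abs_le'.2 ⟨?_, ?_⟩⟩
  · exact le_max_of_le_right (sub_le_iff_le_add'.2 (hN g hg))
  · refine le_max_of_le_left ?_
    linarith [hm g hg q hq]

end IsPotential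

theorem exists_forall_abs_le_of_isCorner {i : Fin 6} {c : Pt} (hc : G.IsCorner i c)
    (hc' : G.IsCorner (i + 1) c) (h₀ : Ed → ℝ) :
    ∃ M, ∀ h ∈ CC G G.boundary h₀, ∀ e ∈ G.edges, |h e| ≤ M := by
  rcases (CC G G.boundary h₀).eq_empty_or_nonempty with hempty | ⟨h, hh⟩
  · exact ⟨0, by simp [hempty]⟩
  obtain ⟨g₀, hg₀, -⟩ := exists_isPotential hh
  have hedge : ∀ e ∈ G.edges, ∃ M, ∀ h ∈ CC G G.boundary h₀, |h e| ≤ M := by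
    intro e he
    obtain ⟨he₁, he₂⟩ := mem_region_of_mem_edges he
    obtain ⟨M₁, hM₁⟩ := hg₀.exists_forall_abs_sub_le hc hc' he₁
    obtain ⟨M₂, hM₂⟩ := hg₀.exists_forall_abs_sub_le hc hc' he₂
    refine ⟨M₂ + M₁, fun h hh ↦ ?_⟩
    obtain ⟨g, hg, hhg⟩ := exists_isPotential hh
    calc |h e| = |g e.2 - g e.1| := by rw [hhg e he]
      _ ≤ |g e.2 - (g - g₀) c| + |(g - g₀) c - g e.1| := abs_sub_le _ _ _
      _ ≤ M₂ + M₁ := add_le_add (hM₂ g hg) (abs_sub_comm (g e.1) _ ▸ hM₁ g hg)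
  choose! M hM using hedge
  obtain ⟨B, hB⟩ := (G.edges.image M).exists_le
  exact ⟨B, fun h hh e he ↦ (hM e he h hh).trans (hB _ (Finset.mem_image_of_mem M he))⟩

end ConvexGrid

/-- If the region of the convex grid G is not a hexagon (i.e. it is
the convex hull of at most five points) and h₀ is given on all boundary edges, then
C(G,h₀) is bounded. -/
theorem stmt8 (G : ConvexGrid) (S : Finset Pt) (hS : S.card ≤ 5)
    (hreg : G.region = convexHull ℝ (↑S : Set Pt)) (h₀ : Ed → ℝ) :
    ∃ M : ℝ, ∀ h ∈ CC G (↑G.boundary) h₀, ∀ e ∈ G.edges, |h e| ≤ M := by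
  obtain ⟨i, c, hc, hc'⟩ := ConvexGrid.exists_isCorner_isCorner_succ hS hreg
  exact ConvexGrid.exists_forall_abs_le_of_isCorner hc hc' h₀

end
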